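/- Let L be recognized by a parity automaton with costs A over Σ_I × Σ_O with n states and k colors, where Ω(Q) contains both an even and an odd color. If Player O wins Γ_f(L) for some delay function f, then Player O also wins Γ_f(L) for the constant delay function f with f(0) = 2^{2n⁴k²+1}. -/

import Mathlib

attribute [local instance] Classical.propDecidable

noncomputable section

/-- A parity automaton with costs `(Q, A, qI, δ, Ω, Cst)`.
`Cst q a = true` means that the transition `(q, a, δ q a)` is an increment-transition,
`Cst q a = false` means it is an `ε`-transition. -/
structure PACost (Q : Type) (A : Type) where
  qI : Q
  δ : Q → A → Q
  Ω : Q → ℕ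
  Cst : Q → A → Bool

namespace PACost

variable {Q A : Type}

/-- The state reached after processing the first `n` letters of `w` starting in `q0`. -/
def stateAt (M : PACost Q A) (q0 : Q) (w : ℕ → A) : ℕ → Q
  | 0 => q0
  | n + 1 => M.δ (stateAt M q0 w n) (w n)

/-- The cost (number of increment-transitions) of the run infix between positions `m` and `n`. -/
def segCost (M : PACost Q A) (q0 : Q) (w : ℕ → A) (m n : ℕ) : ℕ :=
  ((Finset.Ico m n).filter fun j => M.Cst (stateAt M q0 w j) (w j) = true).card

/-- `Ans c`: the set of even colors of `M` that are larger than `c`. -/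
def Ans (M : PACost Q A) (c : ℕ) : Set ℕ :=
  { c' | (∃ q, M.Ω q = c') ∧ c < c' ∧ Even c' }

/-- The cost-of-response at position `n` of the run of `M` on `w` starting in `q0`. -/
def Cor (M : PACost Q A) (q0 : Q) (w : ℕ → A) (n : ℕ) : ℕ∞ :=
  if Even (M.Ω (stateAt M q0 w n)) then 0
  else
    sInf { c : ℕ∞ | ∃ n', n < n' ∧
      M.Ω (stateAt M q0 w n') ∈ M.Ans (M.Ω (stateAt M q0 w n)) ∧
      c = (segCost M q0 w n n' : ℕ∞) }

/-- The run of `M` on `w` starting in `q0` satisfies the parity condition with costs. -/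
def Accepting (M : PACost Q A) (q0 : Q) (w : ℕ → A) : Prop :=
  Filter.limsup (fun n => Cor M q0 w n) Filter.atTop < ⊤

/-- The language of `M`. -/
def Lang (M : PACost Q A) : Set (ℕ → A) := { w | Accepting M M.qI w }

/-- `M` is a finitary Büchi automaton: every transition is an increment-transition and
all colors are `1` or `2`. -/
def FinBuchi (M : PACost Q A) : Prop :=
  (∀ q a, M.Cst q a = true) ∧ ∀ q, M.Ω q = 1 ∨ M.Ω q = 2

end PACost

/-- The finite segment `w m, w (m+1), …, w (n-1)` of an infinite word `w`. -/
def seg {A : Type} (w : ℕ → A) (m n : ℕ) : List A :=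
  (List.range (n - m)).map fun i => w (m + i)

section DelayGames

variable {I O : Type}

/-- The `n`-th letter of the concatenation `u 0 ++ u 1 ++ u 2 ++ ⋯`
(well-defined whenever all blocks are non-empty). -/
def flatWord [Inhabited I] (u : ℕ → List I) (n : ℕ) : I :=
  (((List.range (n + 1)).map u).flatten).getD n default

/-- A delay function maps every round to a positive number of letters. -/
def DelayFn (f : ℕ → ℕ) : Prop := ∀ i, 0 < f i

/-- The constant delay function `f_k` with `f_k 0 = k + 1` and `f_k i = 1` for `i > 0`. -/
def constDF (k : ℕ) : ℕ → ℕ := fun i => if i = 0 then k + 1 else 1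

/-- The sequence of letters Player I has produced up to (and including) round `i`. -/
def oHist (u : ℕ → List I) (i : ℕ) : List I := ((List.range (i + 1)).map u).flatten

/-- `τO` is a winning strategy for Player O in the delay game with delay function `f`
and winning condition `L`. -/
def OWinning [Inhabited I] (f : ℕ → ℕ) (L : Set (ℕ → I × O)) (τO : List I → O) : Prop :=
  ∀ u : ℕ → List I, ∀ v : ℕ → O,
    (∀ i, (u i).length = f i) →
    (∀ i, v i = τO (oHist u i)) →
    (fun n => (flatWord u n, v n)) ∈ L

/-- Player O wins the delay game `Γ_f(L)`. -/
def OWins [Inhabited I] (f : ℕ → ℕ) (L : Set (ℕ → I × O)) : Prop :=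
  ∃ τO : List I → O, OWinning f L τO

/-- `τI` is a winning strategy for Player I in the delay game with delay function `f`
and winning condition `L`. -/
def IWinning [Inhabited I] (f : ℕ → ℕ) (L : Set (ℕ → I × O)) (τI : List O → List I) : Prop :=
  (∀ w, (τI w).length = f w.length) ∧
  ∀ u : ℕ → List I, ∀ v : ℕ → O,
    (∀ i, u i = τI ((List.range i).map v)) →
    (fun n => (flatWord u n, v n)) ∉ L

/-- Player I wins the delay game `Γ_f(L)`. -/
def IWins [Inhabited I] (f : ℕ → ℕ) (L : Set (ℕ → I × O)) : Prop :=
  ∃ τI : List O → List I, IWinning f L τI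

/-- The cost of a strategy `τO` of Player O: the supremum of the word-costs `wc` of the
outcomes of plays consistent with `τO`. -/
def stratCost [Inhabited I] (wc : (ℕ → I × O) → ℕ∞) (f : ℕ → ℕ) (τO : List I → O) : ℕ∞ :=
  ⨆ (u : ℕ → List I) (v : ℕ → O)
    (_ : (∀ i, (u i).length = f i) ∧ ∀ i, v i = τO (oHist u i)),
    wc (fun n => (flatWord u n, v n))

/-- An optimal winning strategy for Player O in `Γ_f(L)` exists and has cost `c`. -/
def OptimalCostIs [Inhabited I] (L : Set (ℕ → I × O)) (wc : (ℕ → I × O) → ℕ∞)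
    (f : ℕ → ℕ) (c : ℕ∞) : Prop :=
  (∃ τO, OWinning f L τO ∧ stratCost wc f τO = c) ∧
  ∀ τO, OWinning f L τO → c ≤ stratCost wc f τO

end DelayGames

section Helper

/-- Summary of a finite run: current state, largest even color seen, largest open request,
whether an increment has been seen (colors are represented by states). -/
abbrev Summ (Q : Type) := Q × Option Q × Option Q × Bool

variable {Q A I O : Type}

def hcol (M : PACost Q A) : Option Q → ℕ
  | none => 0
  | some q => M.Ω q + 1

def hinit (q : Q) : Summ Q := (q, none, none, false)

def hstep (M : PACost Q A) (s : Summ Q) (a : A) : Summ Q :=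
  (M.δ s.1 a,
   (if Even (M.Ω s.1) ∧ hcol M s.2.1 < M.Ω s.1 + 1 then some s.1 else s.2.1),
   (if hcol M s.2.2.1 < M.Ω s.1 + 1 then
      (if Even (M.Ω s.1) then none else some s.1) else s.2.2.1),
   (s.2.2.2 || M.Cst s.1 a))

/-- The segment of length `l` starting at `s`. -/
def sg (w : ℕ → A) (s l : ℕ) : List A := (List.range l).map fun i => w (s + i)

theorem sg_succ (w : ℕ → A) (s l : ℕ) : sg w s (l+1) = sg w s l ++ [w (s+l)] := by
  simp [sg, List.range_succ]

theorem sg_congr {w w' : ℕ → A} {s l : ℕ} (h : ∀ n, n < s + l → w n = w' n) :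
    sg w s l = sg w' s l := by
  unfold sg
  apply List.map_congr_left
  intro a ha
  rw [List.mem_range] at ha
  exact h _ (by omega)

theorem stateAt_congr (M : PACost Q A) (q : Q) {w w' : ℕ → A} (s : ℕ)
    (h : ∀ n, n < s → w n = w' n) : M.stateAt q w s = M.stateAt q w' s := by
  induction s with
  | zero => rfl
  | succ s ih =>
    simp only [PACost.stateAt]
    rw [ih (fun n hn => h n (by omega)), h s (by omega)]

def summ (M : PACost Q A) (q0 : Q) (w : ℕ → A) (s l : ℕ) : Summ Q :=
  (sg w s l).foldl (hstep M) (hinit (M.stateAt q0 w s))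

theorem summ_succ (M : PACost Q A) (q0 : Q) (w : ℕ → A) (s l : ℕ) :
    summ M q0 w s (l+1) = hstep M (summ M q0 w s l) (w (s+l)) := by
  simp [summ, sg_succ]

theorem summ_fst (M : PACost Q A) (q0 : Q) (w : ℕ → A) (s l : ℕ) :
    (summ M q0 w s l).1 = M.stateAt q0 w (s+l) := by
  induction l with
  | zero => rfl
  | succ l ih =>
    rw [summ_succ, ← add_assoc]
    simp only [hstep, PACost.stateAt]
    rw [ih]

theorem summ_even (M : PACost Q A) (q0 : Q) (w : ℕ → A) (s l : ℕ) :
    (∀ j, s ≤ j → j < s + l → Even (M.Ω (M.stateAt q0 w j)) →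
      M.Ω (M.stateAt q0 w j) < hcol M (summ M q0 w s l).2.1) ∧
    (∀ q, (summ M q0 w s l).2.1 = some q → ∃ j, s ≤ j ∧ j < s + l ∧ M.stateAt q0 w j = q ∧
      Even (M.Ω q)) := by
  induction l with
  | zero =>
    refine ⟨fun j h1 h2 => by omega, fun q hq => ?_⟩
    simp [summ, sg, hinit] at hq
  | succ l ih =>
    obtain ⟨ih1, ih2⟩ := ih
    rw [summ_succ]
    simp only [hstep, summ_fst]
    split_ifs with h
    · refine ⟨fun j h1 h2 he => ?_, fun q hq => ?_⟩
      · by_cases hj : j = s + l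
        · subst hj; simp [hcol]
        · have := ih1 j h1 (by omega) he
          simp only [hcol] at *
          omega
      · simp only [Option.some.injEq] at hq
        exact ⟨s+l, by omega, by omega, hq, hq ▸ h.1⟩
    · refine ⟨fun j h1 h2 he => ?_, fun q hq => ?_⟩
      · by_cases hj : j = s + l
        · subst hj
          have := not_and.1 h he
          omega
        · exact ih1 j h1 (by omega) he
      · obtain ⟨j, a, b, c, d⟩ := ih2 q hq
        exact ⟨j, a, by omega, c, d⟩

theorem summ_odd (M : PACost Q A) (q0 : Q) (w : ℕ → A) (s l : ℕ) :
    (∀ j, s ≤ j → j < s + l → ¬ Even (M.Ω (M.stateAt q0 w j)) →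
      (∃ j', j < j' ∧ j' < s + l ∧ Even (M.Ω (M.stateAt q0 w j')) ∧
        M.Ω (M.stateAt q0 w j) < M.Ω (M.stateAt q0 w j')) ∨
      M.Ω (M.stateAt q0 w j) < hcol M (summ M q0 w s l).2.2.1) ∧
    (∀ q, (summ M q0 w s l).2.2.1 = some q → ∃ j, s ≤ j ∧ j < s + l ∧ M.stateAt q0 w j = q ∧
      ¬ Even (M.Ω q) ∧ ∀ j', j < j' → j' < s + l → Even (M.Ω (M.stateAt q0 w j')) →
        ¬ M.Ω q < M.Ω (M.stateAt q0 w j')) := by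
  induction l with
  | zero =>
    refine ⟨fun j h1 h2 => by omega, fun q hq => ?_⟩
    simp [summ, sg, hinit] at hq
  | succ l ih =>
    obtain ⟨ih1, ih2⟩ := ih
    rw [summ_succ]
    simp only [hstep, summ_fst]
    split_ifs with h he
    · refine ⟨fun j h1 h2 ho => ?_, fun q hq => by simp at hq⟩
      left
      by_cases hj : j = s + l
      · subst hj; exact absurd he ho
      · rcases ih1 j h1 (by omega) ho with ⟨j', a, b, c, d⟩ | h3
        · exact ⟨j', a, by omega, c, d⟩
        · exact ⟨s+l, by omega, by omega, he, by omega⟩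
    · refine ⟨fun j h1 h2 ho => ?_, fun q hq => ?_⟩
      · by_cases hj : j = s + l
        · subst hj; right; simp [hcol]
        · rcases ih1 j h1 (by omega) ho with ⟨j', a, b, c, d⟩ | h3
          · exact Or.inl ⟨j', a, by omega, c, d⟩
          · right
            simp only [hcol] at *
            omega
      · simp only [Option.some.injEq] at hq
        exact ⟨s+l, by omega, by omega, hq, hq ▸ he, fun j' h1 h2 => by omega⟩
    · refine ⟨fun j h1 h2 ho => ?_, fun q hq => ?_⟩
      · by_cases hj : j = s + l
        · subst hj; right; omega
        · rcases ih1 j h1 (by omega) ho with ⟨j', a, b, c, d⟩ | h3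
          · exact Or.inl ⟨j', a, by omega, c, d⟩
          · exact Or.inr h3
      · obtain ⟨j, a, b, c, d, e⟩ := ih2 q hq
        refine ⟨j, a, by omega, c, d, fun j' h1 h2 h3 => ?_⟩
        by_cases hj : j' = s + l
        · subst hj
          rw [hq] at h
          simp only [hcol] at h
          omega
        · exact e j' h1 (by omega) h3

theorem summ_cost (M : PACost Q A) (q0 : Q) (w : ℕ → A) (s l : ℕ) :
    (summ M q0 w s l).2.2.2 = true ↔ ∃ j, s ≤ j ∧ j < s + l ∧
      M.Cst (M.stateAt q0 w j) (w j) = true := by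
  induction l with
  | zero =>
    simp only [summ, sg, hinit]
    simp
    intro x h1 h2; omega
  | succ l ih =>
    rw [summ_succ]
    simp only [hstep, summ_fst, Bool.or_eq_true, ih]
    constructor
    · rintro (⟨j, a, b, c⟩ | h)
      · exact ⟨j, a, by omega, c⟩
      · exact ⟨s+l, by omega, by omega, h⟩
    · rintro ⟨j, a, b, c⟩
      by_cases hj : j = s + l
      · subst hj; exact Or.inr c
      · exact Or.inl ⟨j, a, by omega, c⟩

theorem accepting_iff (M : PACost Q A) (q0 : Q) (w : ℕ → A) :
    M.Accepting q0 w ↔ ∃ b N : ℕ, ∀ p, N ≤ p → ¬ Even (M.Ω (M.stateAt q0 w p)) →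
      ∃ p', p < p' ∧ Even (M.Ω (M.stateAt q0 w p')) ∧
        M.Ω (M.stateAt q0 w p) < M.Ω (M.stateAt q0 w p') ∧ M.segCost q0 w p p' ≤ b := by
  unfold PACost.Accepting
  constructor
  · intro h
    rw [Filter.limsup_eq, sInf_lt_iff] at h
    obtain ⟨c, hev, hc2⟩ := h
    replace hev := Filter.eventually_atTop.1 hev
    obtain ⟨N, hN⟩ := hev
    refine ⟨c.toNat, N, fun p hp ho => ?_⟩
    have h1 := hN p hp
    simp only [PACost.Cor, if_neg ho] at h1
    have h1 := lt_of_le_of_lt h1 (show c < c + 1 from ENat.lt_add_one_iff hc2.ne |>.2 le_rfl)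
    rw [sInf_lt_iff] at h1
    obtain ⟨x, ⟨p', hp', ha, rfl⟩, hx⟩ := h1
    refine ⟨p', hp', ha.2.2, ha.2.1, ?_⟩
    have : ((M.segCost q0 w p p' : ℕ) : ℕ∞) ≤ (c.toNat : ℕ∞) := by
      rw [ENat.coe_toNat hc2.ne]; exact (ENat.lt_add_one_iff hc2.ne).1 hx
    exact_mod_cast this
  · rintro ⟨b, N, h⟩
    refine lt_of_le_of_lt (Filter.limsup_le_of_le (a := (b : ℕ∞)) ?_ ?_) (ENat.natCast_lt_top b)
    · isBoundedDefault
    · rw [Filter.eventually_atTop]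
      refine ⟨N, fun p hp => ?_⟩
      unfold PACost.Cor
      split_ifs with ho
      · exact zero_le
      · obtain ⟨p', h1, h2, h3, h4⟩ := h p hp ho
        refine le_trans (sInf_le ⟨p', h1, ⟨⟨_, rfl⟩, h3, h2⟩, rfl⟩) ?_
        exact_mod_cast h4

/-- The abstract winning condition on a sequence of block summaries. -/
def AbsAcc (M : PACost Q A) (σ : ℕ → Summ Q) : Prop :=
  ∃ b N : ℕ, ∀ i, N ≤ i → ∀ q, (σ i).2.2.1 = some q → ∃ j, i < j ∧ ∃ q', (σ j).2.1 = some q' ∧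
    M.Ω q < M.Ω q' ∧ ((Finset.Ioo i j).filter fun l => (σ l).2.2.2 = true).card ≤ b

theorem exists_block {B : ℕ → ℕ} (hB : StrictMono B) (h0 : B 0 = 0) (p : ℕ) :
    ∃ j, B j ≤ p ∧ p < B (j+1) := by
  have hex : ∃ j, p < B (j+1) := ⟨p, lt_of_lt_of_le (Nat.lt_succ_self p) (hB.id_le _)⟩
  refine ⟨Nat.find hex, ?_, Nat.find_spec hex⟩
  rcases Nat.eq_zero_or_pos (Nat.find hex) with h | h
  · rw [h, h0]; omega
  · have := Nat.find_min hex (m := Nat.find hex - 1) (by omega)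
    rw [Nat.sub_add_cancel h] at this
    omega

theorem absAcc_of_accepting (M : PACost Q A) (q0 : Q) (w : ℕ → A) (B : ℕ → ℕ)
    (hB : StrictMono B) (h0 : B 0 = 0) (h : M.Accepting q0 w) :
    AbsAcc M (fun i => summ M q0 w (B i) (B (i+1) - B i)) := by
  have hadd : ∀ i, B i + (B (i+1) - B i) = B (i+1) := fun i => by
    have := hB (Nat.lt_succ_self i); simp only [Nat.succ_eq_add_one] at this; omega
  rw [accepting_iff] at h
  obtain ⟨b, N, h⟩ := h
  refine ⟨b, N, fun i hi q hq => ?_⟩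
  obtain ⟨p, hp1, hp2, rfl, hodd, hun⟩ := (summ_odd M q0 w _ _).2 q hq
  rw [hadd] at hp2 hun
  have hiB : i ≤ B i := hB.id_le i
  obtain ⟨p', hp', hev, hlt, hcost⟩ := h p (by omega) hodd
  have hp'2 : B (i+1) ≤ p' := by
    by_contra hc
    exact hun p' hp' (by omega) hev hlt
  obtain ⟨j, hj1, hj2⟩ := exists_block hB h0 p'
  have hij : i < j := by
    have : B (i+1) < B (j+1) := by omega
    have := hB.lt_iff_lt.1 this
    omega
  have he := (summ_even M q0 w (B j) (B (j+1) - B j)).1 p' hj1 (by rw [hadd]; exact hj2) hev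
  refine ⟨j, hij, ?_⟩
  cases hE : (summ M q0 w (B j) (B (j+1) - B j)).2.1 with
  | none => rw [hE] at he; simp [hcol] at he
  | some q' =>
    rw [hE] at he
    simp only [hcol] at he
    refine ⟨q', rfl, by omega, le_trans ?_ hcost⟩
    have hpos : ∀ l, ∃ x, (summ M q0 w (B l) (B (l+1) - B l)).2.2.2 = true →
        B l ≤ x ∧ x < B (l+1) ∧ M.Cst (M.stateAt q0 w x) (w x) = true := by
      intro l
      by_cases hl : (summ M q0 w (B l) (B (l+1) - B l)).2.2.2 = true
      · obtain ⟨x, a, b, c⟩ := (summ_cost M q0 w _ _).1 hl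
        rw [hadd] at b
        exact ⟨x, fun _ => ⟨a, b, c⟩⟩
      · exact ⟨0, fun h => absurd h hl⟩
    choose g hg using hpos
    unfold PACost.segCost
    refine Finset.card_le_card_of_injOn g ?_ ?_
    · intro l hl
      simp only [Finset.coe_filter, Finset.mem_Ioo, Set.mem_ofPred_eq, Finset.mem_Ico] at hl ⊢
      obtain ⟨a, b, c⟩ := hg l hl.2
      have h1 : B (i+1) ≤ B l := hB.monotone (by omega)
      have h2 : B (l+1) ≤ B j := hB.monotone (by omega)
      exact ⟨⟨by omega, by omega⟩, c⟩
    · intro l hl l' hl' hEq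
      simp only [Finset.coe_filter, Set.mem_ofPred_eq] at hl hl'
      obtain ⟨a, b, c⟩ := hg l hl.2
      obtain ⟨a', b', c'⟩ := hg l' hl'.2
      rw [hEq] at a b
      have h1 : B l < B (l'+1) := by omega
      have h2 : B l' < B (l+1) := by omega
      have h1 := hB.lt_iff_lt.1 h1
      have h2 := hB.lt_iff_lt.1 h2
      omega

theorem accepting_of_absAcc (M : PACost Q A) (q0 : Q) (w : ℕ → A) (d : ℕ) (hd : 0 < d)
    (h : AbsAcc M (fun i => summ M q0 w (i * d) d)) : M.Accepting q0 w := by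
  obtain ⟨b, N, h⟩ := h
  rw [accepting_iff]
  refine ⟨(b+2) * d, N * d, fun p hp hodd => ?_⟩
  have hb : ∀ x, x / d * d ≤ x ∧ x < x / d * d + d := fun x =>
    ⟨Nat.div_mul_le_self x d, Nat.lt_div_mul_add hd⟩
  have hcard : ∀ i j p p', p / d = i → p' < j * d + d → ((Finset.Ioo i j).filter fun l =>
      (summ M q0 w (l * d) d).2.2.2 = true).card ≤ b → M.segCost q0 w p p' ≤ (b+2) * d := by
    intro i j p p' hi hj hc
    have hsub : ((Finset.Ico p p').filter fun j => M.Cst (M.stateAt q0 w j) (w j) = true) ⊆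
        (insert i (insert j ((Finset.Ioo i j).filter fun l =>
      (summ M q0 w (l * d) d).2.2.2 = true))).biUnion (fun l => Finset.Ico (l*d) (l*d+d)) := by
      intro x hx
      simp only [Finset.mem_filter, Finset.mem_Ico] at hx
      rw [Finset.mem_biUnion]
      refine ⟨x / d, ?_, by rw [Finset.mem_Ico]; exact hb x⟩
      simp only [Finset.mem_insert, Finset.mem_filter, Finset.mem_Ioo]
      have h1 : i ≤ x / d := by rw [← hi]; exact Nat.div_le_div_right hx.1.1
      have h2 : x / d ≤ j := by
        have : x / d < j + 1 := by
          rw [Nat.div_lt_iff_lt_mul hd, add_mul]; omega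
        omega
      by_cases h3 : x / d = i
      · exact Or.inl h3
      by_cases h4 : x / d = j
      · exact Or.inr (Or.inl h4)
      refine Or.inr (Or.inr ⟨⟨by omega, by omega⟩, ?_⟩)
      rw [summ_cost]
      exact ⟨x, (hb x).1, (hb x).2, hx.2⟩
    unfold PACost.segCost
    refine le_trans (Finset.card_le_card hsub) (le_trans
      (Finset.card_biUnion_le_card_mul _ _ d (fun l _ => by simp)) ?_)
    refine Nat.mul_le_mul_right d ?_
    refine le_trans (Finset.card_insert_le _ _) ?_
    have := Finset.card_insert_le j ((Finset.Ioo i j).filter fun l =>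
      (summ M q0 w (l * d) d).2.2.2 = true)
    omega
  have hNi : N ≤ p / d := by rw [Nat.le_div_iff_mul_le hd]; exact hp
  rcases (summ_odd M q0 w (p / d * d) d).1 p (hb p).1 (hb p).2 hodd with
    ⟨p', h1, h2, h3, h4⟩ | h5
  · exact ⟨p', h1, h3, h4, hcard (p/d) (p/d) p p' rfl h2 (by simp)⟩
  · cases hE : (summ M q0 w (p / d * d) d).2.2.1 with
    | none => rw [hE] at h5; simp [hcol] at h5
    | some q =>
      rw [hE] at h5
      simp only [hcol] at h5
      obtain ⟨j, hij, q', hq', hlt, hc⟩ := h (p / d) hNi q hE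
      obtain ⟨p', h1, h2, rfl, h4⟩ := (summ_even M q0 w (j*d) d).2 q' hq'
      refine ⟨p', ?_, h4, by omega, hcard (p/d) j p p' rfl h2 hc⟩
      have : (p/d+1) * d ≤ j * d := Nat.mul_le_mul_right d hij
      have := (hb p).2
      rw [add_mul] at *
      omega

/-! Types of input words and pumping -/

def typ (M : PACost Q (I × O)) (x : List I) (q : Q) : Set (Summ Q) :=
  { s | ∃ z : List (I × O), z.map Prod.fst = x ∧ z.foldl (hstep M) (hinit q) = s }

def typDFA (M : PACost Q (I × O)) : DFA I (Q → Set (Summ Q)) where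
  step t a := fun q => { s | ∃ s' ∈ t q, ∃ b : O, s = hstep M s' (a, b) }
  start := fun q => {hinit q}
  accept := ∅

theorem typ_eq (M : PACost Q (I × O)) (x : List I) : typ M x = (typDFA M).eval x := by
  induction x using List.reverseRecOn with
  | nil =>
    funext q
    ext s
    simp only [typ, DFA.eval_nil, typDFA]
    constructor
    · rintro ⟨z, hz, rfl⟩
      rw [List.map_eq_nil_iff] at hz
      subst hz
      rfl
    · intro hs
      exact ⟨[], rfl, hs.symm⟩
  | append_singleton x a ih =>
    rw [DFA.eval_append_singleton, ← ih]
    funext q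
    ext s
    simp only [typ, typDFA, Set.mem_ofPred_eq]
    constructor
    · rintro ⟨z, hz, rfl⟩
      rw [List.map_eq_append_iff] at hz
      obtain ⟨z1, z2, rfl, h1, h2⟩ := hz
      rw [List.map_eq_singleton_iff] at h2
      obtain ⟨⟨a', b⟩, rfl, h3⟩ := h2
      simp only at h3
      subst h3
      exact ⟨_, ⟨z1, h1, rfl⟩, b, by simp⟩
    · rintro ⟨s', ⟨z, h1, rfl⟩, b, rfl⟩
      exact ⟨z ++ [(a,b)], by simp [h1], by simp⟩

theorem typ_pump [Fintype Q] (M : PACost Q (I × O)) (x : List I)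
    (hx : Fintype.card (Q → Set (Summ Q)) ≤ x.length) (N : ℕ) :
    ∃ x', N ≤ x'.length ∧ typ M x' = typ M x := by
  obtain ⟨q, a, b, c, rfl, -, hb, h1, h2, h3⟩ :=
    (typDFA M).evalFrom_split (s := (typDFA M).start) hx rfl
  refine ⟨a ++ (List.replicate N b).flatten ++ c, ?_, ?_⟩
  · have : 1 ≤ b.length := List.length_pos_iff.2 hb
    simp only [List.length_append, List.length_flatten, List.map_replicate, List.sum_replicate]
    simp only [smul_eq_mul]
    nlinarith
  · have hp : ∀ N, (typDFA M).evalFrom q (List.replicate N b).flatten = q := by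
      intro N
      induction N with
      | zero => simp
      | succ N ih => rw [List.replicate_succ, List.flatten_cons, DFA.evalFrom_of_append, h2, ih]
    rw [typ_eq, typ_eq]
    unfold DFA.eval
    rw [h3.symm, DFA.evalFrom_of_append, DFA.evalFrom_of_append, h1, hp, h3]

theorem typ_card [Fintype Q] : Fintype.card (Q → Set (Summ Q)) =
    2 ^ (2 * (Fintype.card Q)^2 * (Fintype.card Q + 1)^2) := by
  simp only [Fintype.card_fun, Fintype.card_set, Fintype.card_prod, Fintype.card_option,
    Fintype.card_bool]
  rw [← pow_mul]
  congr 1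
  ring

/-! Plays -/

theorem oHist_succ (u : ℕ → List I) (i : ℕ) : oHist u (i+1) = oHist u i ++ u (i+1) := by
  simp [oHist, List.range_succ]

theorem oHist_prefix (u : ℕ → List I) {i j : ℕ} (h : i ≤ j) : oHist u i <+: oHist u j := by
  induction j, h using Nat.le_induction with
  | base => exact List.prefix_rfl
  | succ j _ ih => rw [oHist_succ]; exact ih.trans (List.prefix_append _ _)

theorem oHist_len (u : ℕ → List I) (h : ∀ i, 0 < (u i).length) (i : ℕ) :
    i < (oHist u i).length := by
  induction i with
  | zero => simpa [oHist] using h 0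
  | succ i ih => rw [oHist_succ, List.length_append]; have := h (i+1); omega

theorem prefix_getD [Inhabited I] {l l' : List I} (h : l <+: l') {n : ℕ} (hn : n < l.length) :
    l'.getD n default = l.getD n default := by
  obtain ⟨t, rfl⟩ := h
  rw [List.getD_append _ _ _ _ hn]

theorem flatWord_eq [Inhabited I] (u : ℕ → List I) (h : ∀ i, 0 < (u i).length) {i n : ℕ}
    (hn : n < (oHist u i).length) : flatWord u n = (oHist u i).getD n default := by
  change (oHist u n).getD n default = _
  rcases le_total i n with hl | hl
  · exact prefix_getD (oHist_prefix u hl) hn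
  · exact (prefix_getD (oHist_prefix u hl) (oHist_len u h n)).symm

theorem oHist_eq_sg [Inhabited I] (u : ℕ → List I) (h : ∀ i, 0 < (u i).length) (i : ℕ) :
    oHist u i = sg (flatWord u) 0 (oHist u i).length := by
  apply List.ext_getElem
  · simp [sg]
  · intro n h1 h2
    simp only [sg, List.getElem_map, List.getElem_range, zero_add]
    rw [flatWord_eq u h h1, List.getD_eq_getElem _ _ h1]

theorem sg_append (w : ℕ → A) (s l m : ℕ) : sg w s (l + m) = sg w s l ++ sg w (s+l) m := by
  induction m with
  | zero => simp [sg]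
  | succ m ih => rw [← add_assoc, sg_succ, ih, sg_succ, List.append_assoc, add_assoc]

def Fs (f : ℕ → ℕ) (i : ℕ) : ℕ := ∑ j ∈ Finset.range i, f j

/-- Winning strategy, in terms of infinite words. -/
theorem owinning_word [Inhabited I] {f : ℕ → ℕ} (hf : DelayFn f) {L : Set (ℕ → I × O)}
    {τ : List I → O} (h : OWinning f L τ) (ζ : ℕ → I) :
    (fun n => (ζ n, τ (sg ζ 0 (Fs f (n+1))))) ∈ L := by
  let u : ℕ → List I := fun i => sg ζ (Fs f i) (f i)
  have hlen : ∀ i, (u i).length = f i := fun i => by simp [u, sg]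
  have hpos : ∀ i, 0 < (u i).length := fun i => by rw [hlen]; exact hf i
  have hH : ∀ i, oHist u i = sg ζ 0 (Fs f (i+1)) := by
    intro i
    induction i with
    | zero => simp [oHist, u, Fs]
    | succ i ih =>
      rw [oHist_succ, ih]
      conv_rhs => rw [Fs, Finset.sum_range_succ, sg_append, zero_add]
      rfl
  have hW : ∀ n, flatWord u n = ζ n := by
    intro n
    have h1 := oHist_len u hpos n
    rw [flatWord_eq u hpos h1, List.getD_eq_getElem _ _ h1]
    simp only [hH, sg]
    simp
  have := h u (fun i => τ (oHist u i)) hlen (fun _ => rfl)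
  simpa only [hW, hH] using this

/-! The new strategy -/

section Strat

variable [Inhabited I] [Inhabited O] (M : PACost Q (I × O)) (F : ℕ → ℕ) (τ : List I → O)
  (rep : List I → ℕ → List I) (d : ℕ)

def Wd (α : ℕ → I) : ℕ → List I
  | 0 => []
  | i+1 => Wd α i ++ rep (sg α (i*d) d) (F (Wd α i).length + 1)

def zt (α : ℕ → I) (n : ℕ) : I := (Wd F rep d α (n+1)).getD n default

def ww (α : ℕ → I) (n : ℕ) : I × O :=
  (zt F rep d α n, τ (sg (zt F rep d α) 0 (F (n+1))))

def bd (α : ℕ → I) (i : ℕ) : ℕ := (Wd F rep d α i).length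

def tgt (α : ℕ → I) (i : ℕ) : Summ Q :=
  summ M M.qI (ww F τ rep d α) (bd F rep d α i) (bd F rep d α (i+1) - bd F rep d α i)

def yb (α : ℕ → I) (i : ℕ) : List (I × O) :=
  Classical.epsilon fun z => z.map Prod.fst = sg α (i*d) d ∧
    z.foldl (hstep M) (hinit (M.stateAt M.qI (ww F τ rep d α) (bd F rep d α i))) =
      tgt M F τ rep d α i

def outL (α : ℕ → I) (r : ℕ) : O := ((yb M F τ rep d α (r / d)).getD (r % d) default).2

variable {F rep d}

theorem Wd_prefix (α : ℕ → I) {i j : ℕ} (h : i ≤ j) : Wd F rep d α i <+: Wd F rep d α j := by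
  induction j, h using Nat.le_induction with
  | base => exact List.prefix_rfl
  | succ j _ ih => rw [Wd]; exact ih.trans (List.prefix_append _ _)

theorem bd_succ (hrep : ∀ x N, x.length = d → N ≤ (rep x N).length) (α : ℕ → I) (i : ℕ) :
    bd F rep d α i < bd F rep d α (i+1) ∧ F (bd F rep d α i) ≤ bd F rep d α (i+1) := by
  have := hrep (sg α (i*d) d) (F (Wd F rep d α i).length + 1) (by simp [sg])
  unfold bd
  rw [Wd, List.length_append]
  omega

theorem bd_mono (hrep : ∀ x N, x.length = d → N ≤ (rep x N).length) (α : ℕ → I) :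
    StrictMono (bd F rep d α) := strictMono_nat_of_lt_succ fun i => (bd_succ hrep α i).1

theorem zt_eq (hrep : ∀ x N, x.length = d → N ≤ (rep x N).length) (α : ℕ → I) {i n : ℕ}
    (hn : n < bd F rep d α i) : zt F rep d α n = (Wd F rep d α i).getD n default := by
  unfold zt
  have h1 : n < (Wd F rep d α (n+1)).length :=
    lt_of_lt_of_le (Nat.lt_succ_self n) ((bd_mono (F := F) hrep α).id_le (n+1))
  rcases le_total i (n+1) with hl | hl
  · exact prefix_getD (Wd_prefix α hl) hn
  · exact (prefix_getD (Wd_prefix α hl) h1).symm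

theorem sg_zt (hrep : ∀ x N, x.length = d → N ≤ (rep x N).length) (α : ℕ → I) (i : ℕ) :
    sg (zt F rep d α) (bd F rep d α i) (bd F rep d α (i+1) - bd F rep d α i) =
      rep (sg α (i*d) d) (F (Wd F rep d α i).length + 1) := by
  have hW : Wd F rep d α (i+1) = Wd F rep d α i ++
    rep (sg α (i*d) d) (F (Wd F rep d α i).length + 1) := by rw [Wd]
  apply List.ext_getElem
  · simp [sg, bd, hW]
  · intro n h1 h2
    have h3 : bd F rep d α i + n < bd F rep d α (i+1) := by
      simp [bd, hW, h2]
    have h4 : (sg (zt F rep d α) (bd F rep d α i)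
        (bd F rep d α (i+1) - bd F rep d α i))[n] = zt F rep d α (bd F rep d α i + n) := by
      simp [sg]
    rw [h4, zt_eq hrep α h3, hW, bd, List.getD_append_right _ _ _ _ (by omega),
      Nat.add_sub_cancel_left, List.getD_eq_getElem _ _ h2]

theorem Wd_congr {α α' : ℕ → I} (i : ℕ) (h : ∀ n, n < i * d → α n = α' n) :
    Wd F rep d α i = Wd F rep d α' i := by
  induction i with
  | zero => rfl
  | succ i ih =>
    rw [add_mul, one_mul] at h
    rw [Wd, Wd, ih (fun n hn => h n (by omega)), sg_congr h]

theorem outL_congr (hF : Monotone F) (hrep : ∀ x N, x.length = d → N ≤ (rep x N).length)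
    {α α' : ℕ → I} (r : ℕ)
    (h : ∀ n, n < (r / d + 2) * d → α n = α' n) :
    outL M F τ rep d α r = outL M F τ rep d α' r := by
  unfold outL
  generalize r / d = i at *
  have hle : ∀ j, j ≤ i + 2 → Wd F rep d α j = Wd F rep d α' j := fun j hj =>
    Wd_congr j fun n hn => h n (lt_of_lt_of_le hn (Nat.mul_le_mul_right d hj))
  have hbd : ∀ j, j ≤ i + 2 → bd F rep d α j = bd F rep d α' j := fun j hj => by
    unfold bd; rw [hle j hj]
  have hz : ∀ n, n < bd F rep d α (i+2) → zt F rep d α n = zt F rep d α' n := by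
    intro n hn
    rw [zt_eq hrep α hn, zt_eq hrep α' (by rwa [← hbd _ le_rfl]), hle _ le_rfl]
  have hw : ∀ n, n < bd F rep d α (i+1) → ww F τ rep d α n = ww F τ rep d α' n := by
    intro n hn
    have h1 : bd F rep d α (i+1) < bd F rep d α (i+2) ∧
      F (bd F rep d α (i+1)) ≤ bd F rep d α (i+2) := bd_succ (F := F) hrep α (i+1)
    have h2 : F (n+1) ≤ F (bd F rep d α (i+1)) := hF hn
    unfold ww
    rw [hz n (by omega), sg_congr (fun m hm => hz m (by omega))]
  have h1 := (bd_succ (F := F) hrep α i).1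
  have hs : M.stateAt M.qI (ww F τ rep d α) (bd F rep d α i) =
      M.stateAt M.qI (ww F τ rep d α') (bd F rep d α' i) := by
    rw [← hbd i (by omega)]
    exact stateAt_congr M _ _ fun n hn => hw n (by omega)
  have ht : tgt M F τ rep d α i = tgt M F τ rep d α' i := by
    unfold tgt summ
    rw [hs, ← hbd i (by omega), ← hbd (i+1) (by omega)]
    rw [sg_congr (fun n hn => hw n (by omega))]
  have hb : sg α (i*d) d = sg α' (i*d) d := sg_congr fun n hn => h n (by rw [add_mul]; omega)
  unfold yb
  rw [hs, ht, hb]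

theorem yb_spec (hrep : ∀ x N, x.length = d → N ≤ (rep x N).length)
    (htyp : ∀ x N, x.length = d → typ M (rep x N) = typ M x) (α : ℕ → I) (i : ℕ) :
    (yb M F τ rep d α i).map Prod.fst = sg α (i*d) d ∧
    (yb M F τ rep d α i).foldl (hstep M)
      (hinit (M.stateAt M.qI (ww F τ rep d α) (bd F rep d α i))) = tgt M F τ rep d α i := by
  unfold yb
  refine Classical.epsilon_spec (p := fun z : List (I × O) => z.map Prod.fst = sg α (i*d) d ∧
    z.foldl (hstep M) (hinit (M.stateAt M.qI (ww F τ rep d α) (bd F rep d α i))) =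
      tgt M F τ rep d α i) ?_
  have h1 : tgt M F τ rep d α i ∈ typ M (rep (sg α (i*d) d) (F (Wd F rep d α i).length + 1))
      (M.stateAt M.qI (ww F τ rep d α) (bd F rep d α i)) := by
    refine ⟨sg (ww F τ rep d α) (bd F rep d α i) (bd F rep d α (i+1) - bd F rep d α i), ?_, rfl⟩
    rw [← sg_zt hrep α i]
    simp [sg, ww]
  rw [htyp _ _ (by simp [sg])] at h1
  exact h1

theorem out_accepting (hd : 0 < d) (hrep : ∀ x N, x.length = d → N ≤ (rep x N).length)
    (htyp : ∀ x N, x.length = d → typ M (rep x N) = typ M x) (α : ℕ → I)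
    (h : M.Accepting M.qI (ww F τ rep d α)) :
    M.Accepting M.qI (fun n => (α n, outL M F τ rep d α n)) := by
  set w : ℕ → I × O := fun n => (α n, outL M F τ rep d α n) with hw
  have hseg : ∀ i, sg w (i*d) d = yb M F τ rep d α i := by
    intro i
    have hs := (yb_spec (F := F) M τ hrep htyp α i).1
    have hl : (yb M F τ rep d α i).length = d := by
      have := congrArg List.length hs
      simpa [sg] using this
    apply List.ext_getElem
    · simp [sg, hl]
    · intro n h1 h2
      have h3 : n < d := by omega
      simp only [sg, List.getElem_map, List.getElem_range, hw]
      apply Prod.ext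
      · have : ((yb M F τ rep d α i).map Prod.fst)[n]'(by simpa using h2) =
          (sg α (i*d) d)[n]'(by simpa [sg] using h3) := by simp only [hs]
        simp only [sg, List.getElem_map, List.getElem_range] at this
        exact this.symm
      · simp only [outL]
        have e1 : (i * d + n) / d = i := by
          rw [mul_comm, Nat.mul_add_div hd, Nat.div_eq_of_lt h3, add_zero]
        have e2 : (i * d + n) % d = n := by
          rw [mul_comm, Nat.mul_add_mod, Nat.mod_eq_of_lt h3]
        rw [e1, e2, List.getD_eq_getElem _ _ h2]
  have hboth : ∀ i, M.stateAt M.qI w (i*d) =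
      M.stateAt M.qI (ww F τ rep d α) (bd F rep d α i) →
      summ M M.qI w (i*d) d = tgt M F τ rep d α i := by
    intro i hi
    unfold summ
    rw [hseg, hi]
    exact (yb_spec (F := F) M τ hrep htyp α i).2
  have hst : ∀ i, M.stateAt M.qI w (i*d) =
      M.stateAt M.qI (ww F τ rep d α) (bd F rep d α i) := by
    intro i
    induction i with
    | zero => simp [bd, Wd, PACost.stateAt]
    | succ i ih =>
      have h1 := congrArg Prod.fst (hboth i ih)
      rw [summ_fst, tgt, summ_fst] at h1
      have h2 := (bd_succ (F := F) hrep α i).1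
      rw [Nat.add_sub_cancel' h2.le] at h1
      rw [add_mul, one_mul]
      exact h1
  apply accepting_of_absAcc M M.qI w d hd
  have h2 := absAcc_of_accepting M M.qI _ (bd F rep d α) (bd_mono hrep α) rfl h
  have : (fun i => summ M M.qI w (i * d) d) = fun i => tgt M F τ rep d α i :=
    funext fun i => hboth i (hst i)
  rw [this]
  exact h2

end Strat

end Helper

/-- Corollary 2, upper bound on the lookahead. If Player O wins
`Γ_f(L(A))` for some delay function `f`, then she also wins it for the constant delay
function with `f 0 = 2^(2n⁴k²+1)`. -/
theorem statement5 {Q I O : Type} [Fintype Q] [Fintype I] [Fintype O] [Inhabited I]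
    (M : PACost Q (I × O)) (n k : ℕ)
    (hn : Fintype.card Q = n) (hk : (Finset.univ.image M.Ω).card = k)
    (he : ∃ q, Even (M.Ω q)) (ho : ∃ q, Odd (M.Ω q))
    (h : ∃ f : ℕ → ℕ, DelayFn f ∧ OWins f M.Lang) :
    OWins (fun i => if i = 0 then 2 ^ (2 * n ^ 4 * k ^ 2 + 1) else 1) M.Lang := by
  obtain ⟨f, hf, τ, hτ⟩ := h
  have : Inhabited O := ⟨τ []⟩
  have hn2 : 2 ≤ n := by
    obtain ⟨q1, h1⟩ := he
    obtain ⟨q2, h2⟩ := ho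
    have hne : q1 ≠ q2 := by
      rintro rfl
      exact (Nat.not_even_iff_odd.2 h2) h1
    have : 1 < Fintype.card Q := Fintype.one_lt_card_iff.2 ⟨q1, q2, hne⟩
    omega
  have hk2 : 2 ≤ k := by
    obtain ⟨q1, h1⟩ := he
    obtain ⟨q2, h2⟩ := ho
    have : 1 < (Finset.univ.image M.Ω).card := by
      rw [Finset.one_lt_card]
      refine ⟨M.Ω q1, by simp, M.Ω q2, by simp, ?_⟩
      intro hEq
      rw [hEq] at h1
      exact (Nat.not_even_iff_odd.2 h2) h1
    omega
  set d := 2 ^ (2 * n ^ 4 * k ^ 2) with hd_def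
  have hd : 0 < d := by positivity
  have hcard : Fintype.card (Q → Set (Summ Q)) ≤ d := by
    rw [typ_card, hn, hd_def]
    apply Nat.pow_le_pow_right (by norm_num)
    have h1 : n + 1 ≤ n * k := by nlinarith
    calc 2 * n^2 * (n+1)^2 ≤ 2 * n^2 * (n*k)^2 :=
          Nat.mul_le_mul_left _ (Nat.pow_le_pow_left h1 2)
      _ = 2 * n^4 * k^2 := by ring
  have hex : ∀ (x : List I) (N : ℕ), ∃ x', x.length = d →
      N ≤ x'.length ∧ typ M x' = typ M x := by
    intro x N
    by_cases hx : x.length = d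
    · obtain ⟨x', h'⟩ := typ_pump M x (by rw [hx]; exact hcard) N
      exact ⟨x', fun _ => h'⟩
    · exact ⟨[], fun h' => absurd h' hx⟩
  choose rep hrep' using hex
  have hrep : ∀ x N, x.length = d → N ≤ (rep x N).length := fun x N hx => (hrep' x N hx).1
  have htyp : ∀ x N, x.length = d → typ M (rep x N) = typ M x := fun x N hx => (hrep' x N hx).2
  have hF : Monotone (Fs f) := fun a b hab =>
    Finset.sum_le_sum_of_subset (Finset.range_mono hab)
  have hf0 : 2 ^ (2 * n ^ 4 * k ^ 2 + 1) = 2 * d := by rw [pow_succ, mul_comm]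
  rw [hf0]
  refine ⟨fun l => outL M (Fs f) τ rep d (fun m => l.getD m default) (l.length - 2 * d), ?_⟩
  intro u v hu hv
  have hpos : ∀ i, 0 < (u i).length := by
    intro i
    rw [hu]
    dsimp only
    split_ifs <;> omega
  have hlen : ∀ r, (oHist u r).length = 2 * d + r := by
    intro r
    induction r with
    | zero => simp [oHist, hu]
    | succ r ih => rw [oHist_succ, List.length_append, ih, hu]; simp; omega
  have hvr : ∀ r, v r = outL M (Fs f) τ rep d (flatWord u) r := by
    intro r
    rw [hv r]
    dsimp only
    rw [hlen, Nat.add_sub_cancel_left]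
    apply outL_congr M τ hF hrep
    intro m hm
    symm
    apply flatWord_eq u hpos
    rw [hlen]
    have := Nat.div_mul_le_self r d
    rw [add_mul] at hm
    omega
  have hv' : v = outL M (Fs f) τ rep d (flatWord u) := funext hvr
  rw [hv']
  exact out_accepting M τ hd hrep htyp (flatWord u)
    (owinning_word hf hτ (zt (Fs f) rep d (flatWord u)))
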